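/- For every a ∈ ℂ with |a| < 1 and every θ ∈ ℝ, the map φ_{a,θ}(z',z_n) := ((1−|a|²)^{1/2m₁}(1−\bar a z_n)^{−1/m₁} z₁, …, (1−|a|²)^{1/2m_{n−1}}(1−\bar a z_n)^{−1/m_{n−1}} z_{n−1}, e^{iθ}(z_n − a)/(1−\bar a z_n)), with principal-branch complex powers, is an automorphism of D_P: it is holomorphic and injective on D_P and maps D_P onto D_P. -/

import Mathlib

open Complex Metric Set

noncomputable section

/-- `ℂⁿ` with `n = N + 1`, carrying the Euclidean norm; points are written `z = (z', z_n)`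
with `z' ∈ ℂᴺ` the first `N` coordinates and `z_n` the last coordinate. -/
abbrev CSp (N : ℕ) : Type := EuclideanSpace ℂ (Fin (N + 1))

variable {N : ℕ}

/-- The last coordinate `z_n` of `z = (z', z_n)`. -/
def lastC (z : CSp N) : ℂ := z (Fin.last N)

/-- The first `N` coordinates `z'` of `z = (z', z_n)`. -/
def initC (z : CSp N) : Fin N → ℂ := fun j => z j.castSucc

/-- The point `(z', z_n) ∈ ℂⁿ`. -/
def mkPt (z' : Fin N → ℂ) (zn : ℂ) : CSp N := WithLp.toLp 2 (Fin.snoc z' zn)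

/-- The weight `wt(K) = Σ_j k_j / (2 m_j)` of a multi-index `K` with respect to
`Λ = (1/m₁, …, 1/m_N)`. -/
def wt (m : Fin N → ℕ) (K : Fin N → ℕ) : ℝ := ∑ j, (K j : ℝ) / (2 * m j)

/-- `P` is a real-valued weighted homogeneous polynomial of the form
`P(z') = Σ_{wt(K)=wt(L)=1/2} a_{KL} z'^K conj(z')^L` with `a_{KL} = conj (a_{LK})`. -/
def IsWHP (m : Fin N → ℕ) (P : (Fin N → ℂ) → ℝ) : Prop :=
  ∃ a : (Fin N → ℕ) → (Fin N → ℕ) → ℂ,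
    {q : (Fin N → ℕ) × (Fin N → ℕ) | a q.1 q.2 ≠ 0}.Finite ∧
    (∀ K L, a K L = starRingEnd ℂ (a L K)) ∧
    (∀ K L, a K L ≠ 0 → wt m K = 1 / 2 ∧ wt m L = 1 / 2) ∧
    (∀ z' : Fin N → ℂ, (P z' : ℂ) =
      ∑ᶠ K, ∑ᶠ L, a K L * (∏ j, z' j ^ K j) * ∏ j, starRingEnd ℂ (z' j) ^ L j)

/-- The general ellipsoid `D_P = {(z',z_n) : |z_n|² + P(z') < 1}`. -/
def DP (P : (Fin N → ℂ) → ℝ) : Set (CSp N) :=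
  {z | ‖lastC z‖ ^ 2 + P (initC z) < 1}

/-- The map `φ_{a,θ}(z',z_n) = ((1-|a|²)^{1/2m₁}(1-conj(a) z_n)^{-1/m₁} z₁, …,
e^{iθ}(z_n - a)/(1 - conj(a) z_n))`, with principal-branch complex powers. -/
def phiMap (m : Fin N → ℕ) (a : ℂ) (θ : ℝ) (z : CSp N) : CSp N :=
  mkPt (fun j => ((1 - ‖a‖ ^ 2 : ℝ) : ℂ) ^ (1 / (2 * (m j : ℂ))) *
          (1 - starRingEnd ℂ a * lastC z) ^ (-(1 / (m j : ℂ))) * initC z j)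
       (Complex.exp (θ * Complex.I) * ((lastC z - a) / (1 - starRingEnd ℂ a * lastC z)))

/-!
Let `u(w)` be the logarithm of `√(1 - |a|²) / (1 - ā w)`. Then `φ_{a,θ}` multiplies `z_j` by
`exp (u(z_n) / m_j)`, so weighted homogeneity multiplies `P(z')` by `|exp u(z_n)|²`. The disc
automorphism acting on `z_n` multiplies `1 - |z_n|²` by the same factor. Hence `φ_{a,θ}` multiplies
`1 - |z_n|² - P(z')` by a positive factor and maps `D_P` into itself. It is inverted by the map of
the same family with parameters `(-e^{iθ} a, -θ)`: the product of the two denominators is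
`1 - |a|²`, so the two values of `u` at corresponding points are opposite.
-/

section UnitDisc

open scoped ComplexConjugate

/-- The automorphism `w ↦ e^{iθ} (w - a) / (1 - ā w)` of the unit disc, through which `φ_{a,θ}`
acts on the last coordinate. -/
def discAut (a : ℂ) (θ : ℝ) (w : ℂ) : ℂ := exp (θ * I) * ((w - a) / (1 - conj a * w))

/-- The logarithm of `√(1 - |a|²) / (1 - ā w)`, the parameter of the dilation which `φ_{a,θ}`
applies to `z'` over the point `w = z_n`. -/
def logDilation (a w : ℂ) : ℂ := log (1 - ‖a‖ ^ 2 : ℝ) / 2 - log (1 - conj a * w)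

variable {a w : ℂ}

lemma one_sub_norm_sq_pos (ha : ‖a‖ < 1) : 0 < 1 - ‖a‖ ^ 2 :=
  sub_pos.2 (pow_lt_one₀ (norm_nonneg a) ha two_ne_zero)

lemma ofReal_one_sub_norm_sq_ne_zero (ha : ‖a‖ < 1) : ((1 - ‖a‖ ^ 2 : ℝ) : ℂ) ≠ 0 :=
  ofReal_ne_zero.2 (one_sub_norm_sq_pos ha).ne'

lemma one_sub_conj_mul_re_pos (ha : ‖a‖ < 1) (hw : ‖w‖ < 1) : 0 < (1 - conj a * w).re := by
  have hlt : ‖conj a * w‖ < 1 := by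
    rw [norm_mul, norm_conj]
    exact mul_lt_one_of_nonneg_of_lt_one_left (norm_nonneg a) ha hw.le
  rw [sub_re, one_re, sub_pos]
  exact (re_le_norm _).trans_lt hlt

lemma one_sub_conj_mul_ne_zero (ha : ‖a‖ < 1) (hw : ‖w‖ < 1) : 1 - conj a * w ≠ 0 :=
  slitPlane_ne_zero (.inl (one_sub_conj_mul_re_pos ha hw))

lemma norm_one_sub_conj_mul_sq_sub_norm_sub_sq (a w : ℂ) :
    ‖1 - conj a * w‖ ^ 2 - ‖w - a‖ ^ 2 = (1 - ‖a‖ ^ 2) * (1 - ‖w‖ ^ 2) := by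
  simp only [← normSq_eq_norm_sq, normSq_apply, sub_re, sub_im, mul_re, mul_im, one_re, one_im,
    conj_re, conj_im]
  ring

lemma differentiableAt_discAut (ha : ‖a‖ < 1) (hw : ‖w‖ < 1) (θ : ℝ) :
    DifferentiableAt ℂ (discAut a θ) w := by
  unfold discAut
  fun_prop (disch := exact one_sub_conj_mul_ne_zero ha hw)

lemma norm_exp_logDilation_sq (ha : ‖a‖ < 1) (hw : ‖w‖ < 1) :
    ‖exp (logDilation a w)‖ ^ 2 = (1 - ‖a‖ ^ 2) / ‖1 - conj a * w‖ ^ 2 := by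
  have hsqrt : exp (log (1 - ‖a‖ ^ 2 : ℝ) / 2) ^ 2 = (1 - ‖a‖ ^ 2 : ℝ) := by
    rw [← exp_nat_mul, Nat.cast_ofNat, mul_div_cancel₀ _ two_ne_zero,
      exp_log (ofReal_one_sub_norm_sq_ne_zero ha)]
  rw [logDilation, exp_sub, exp_log (one_sub_conj_mul_ne_zero ha hw), norm_div, div_pow,
    ← norm_pow, hsqrt, Complex.norm_of_nonneg (one_sub_norm_sq_pos ha).le]

lemma one_sub_norm_discAut_sq (ha : ‖a‖ < 1) (hw : ‖w‖ < 1) (θ : ℝ) :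
    1 - ‖discAut a θ w‖ ^ 2 = ‖exp (logDilation a w)‖ ^ 2 * (1 - ‖w‖ ^ 2) := by
  have hden : ‖1 - conj a * w‖ ^ 2 ≠ 0 :=
    pow_ne_zero 2 (norm_ne_zero_iff.2 (one_sub_conj_mul_ne_zero ha hw))
  rw [discAut, norm_mul, norm_exp_ofReal_mul_I, one_mul, norm_div, div_pow, one_sub_div hden,
    norm_one_sub_conj_mul_sq_sub_norm_sub_sq, norm_exp_logDilation_sq ha hw, div_mul_eq_mul_div]

lemma norm_discAut_lt_one (ha : ‖a‖ < 1) (hw : ‖w‖ < 1) (θ : ℝ) : ‖discAut a θ w‖ < 1 := by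
  have hpos : 0 < 1 - ‖discAut a θ w‖ ^ 2 := by
    rw [one_sub_norm_discAut_sq ha hw]
    have hexp := norm_pos_iff.2 (exp_ne_zero (logDilation a w))
    exact mul_pos (pow_pos hexp 2) (one_sub_norm_sq_pos hw)
  exact (sq_lt_one_iff₀ (norm_nonneg _)).1 (sub_pos.1 hpos)

/-- The centre of the inverse map: `φ_{a,θ}` is inverted by `φ_{b,-θ}` with `b = -e^{iθ} a`. -/
def invCenter (a : ℂ) (θ : ℝ) : ℂ := -(exp (θ * I) * a)

lemma exp_ofReal_neg_mul_I_mul_exp (θ : ℝ) : exp ((-θ : ℝ) * I) * exp (θ * I) = 1 := by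
  rw [← exp_add, ofReal_neg, neg_mul, neg_add_cancel, exp_zero]

lemma invCenter_invCenter (a : ℂ) (θ : ℝ) : invCenter (invCenter a θ) (-θ) = a := by
  rw [invCenter, invCenter, mul_neg, neg_neg, ← mul_assoc, exp_ofReal_neg_mul_I_mul_exp, one_mul]

lemma norm_invCenter (a : ℂ) (θ : ℝ) : ‖invCenter a θ‖ = ‖a‖ := by
  rw [invCenter, norm_neg, norm_mul, norm_exp_ofReal_mul_I, one_mul]

lemma one_sub_conj_mul_discAut_mul (ha : ‖a‖ < 1) (hw : ‖w‖ < 1) (θ : ℝ) :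
    (1 - conj (invCenter a θ) * discAut a θ w) * (1 - conj a * w) = (1 - ‖a‖ ^ 2 : ℝ) := by
  have hrot : conj (exp (θ * I)) * exp (θ * I) = 1 := by
    rw [conj_mul', norm_exp_ofReal_mul_I, ofReal_one, one_pow]
  have hfrac := div_mul_cancel₀ (w - a) (one_sub_conj_mul_ne_zero ha hw)
  rw [discAut, invCenter, map_neg, map_mul]
  push_cast
  rw [← conj_mul']
  linear_combination conj a * (w - a) * hrot + conj (exp (θ * I)) * exp (θ * I) * conj a * hfrac

lemma logDilation_discAut (ha : ‖a‖ < 1) (hw : ‖w‖ < 1) (θ : ℝ) :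
    logDilation (invCenter a θ) (discAut a θ w) = -logDilation a w := by
  have hb : ‖invCenter a θ‖ < 1 := (norm_invCenter a θ).trans_lt ha
  have hre := one_sub_conj_mul_re_pos ha hw
  have hre' := one_sub_conj_mul_re_pos hb (norm_discAut_lt_one ha hw θ)
  have harg' := abs_lt.1 (abs_arg_lt_pi_div_two_iff.2 (.inl hre'))
  have harg := abs_lt.1 (abs_arg_lt_pi_div_two_iff.2 (.inl hre))
  -- Both factors lie in the right half-plane, so the principal logarithm of the product splits.
  have hlog := log_mul (slitPlane_ne_zero (.inl hre')) (slitPlane_ne_zero (.inl hre))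
    ⟨by linarith, by linarith⟩
  rw [one_sub_conj_mul_discAut_mul ha hw] at hlog
  rw [logDilation, logDilation, norm_invCenter, hlog]
  ring

lemma discAut_discAut (ha : ‖a‖ < 1) (hw : ‖w‖ < 1) (θ : ℝ) :
    discAut (invCenter a θ) (-θ) (discAut a θ w) = w := by
  have hden := one_sub_conj_mul_ne_zero ha hw
  have hb : ‖invCenter a θ‖ < 1 := (norm_invCenter a θ).trans_lt ha
  have hden' := one_sub_conj_mul_ne_zero hb (norm_discAut_lt_one ha hw θ)
  have hrot := exp_ofReal_neg_mul_I_mul_exp θ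
  have hnum : exp ((-θ : ℝ) * I) * (discAut a θ w - invCenter a θ) * (1 - conj a * w) =
      w * (1 - ‖a‖ ^ 2 : ℝ) := by
    have hfrac := div_mul_cancel₀ (w - a) hden
    rw [discAut, invCenter]
    push_cast at hrot ⊢
    rw [← conj_mul']
    linear_combination (w - conj a * a * w) * hrot + exp (-θ * I) * exp (θ * I) * hfrac
  rw [discAut, ← mul_div_assoc, div_eq_iff hden']
  apply mul_right_cancel₀ hden
  rw [hnum, mul_assoc, one_sub_conj_mul_discAut_mul ha hw]

end UnitDisc

section Coordinates

lemma lastC_mkPt (z' : Fin N → ℂ) (w : ℂ) : lastC (mkPt z' w) = w := by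
  rw [lastC, mkPt, PiLp.toLp_apply, Fin.snoc_last]

lemma initC_mkPt (z' : Fin N → ℂ) (w : ℂ) : initC (mkPt z' w) = z' := by
  funext j
  rw [initC, mkPt, PiLp.toLp_apply, Fin.snoc_castSucc]

lemma mkPt_initC_lastC (z : CSp N) : mkPt (initC z) (lastC z) = z :=
  congrArg (WithLp.toLp 2) (Fin.snoc_init_self z.ofLp)

lemma differentiable_lastC : Differentiable ℂ (lastC : CSp N → ℂ) := by
  unfold lastC; fun_prop

lemma differentiable_initC : Differentiable ℂ (initC : CSp N → Fin N → ℂ) := by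
  unfold initC; fun_prop

lemma differentiableOn_mkPt {E : Type*} [NormedAddCommGroup E] [NormedSpace ℂ E]
    {f : E → Fin N → ℂ} {g : E → ℂ} {s : Set E} (hf : DifferentiableOn ℂ f s)
    (hg : DifferentiableOn ℂ g s) :
    DifferentiableOn ℂ (fun z => mkPt (f z) (g z)) s := by
  refine differentiableOn_euclidean.2 (Fin.lastCases ?_ fun j => ?_)
  · simpa only [mkPt, Fin.snoc_last] using hg
  · simpa only [mkPt, Fin.snoc_castSucc] using differentiableOn_pi.1 hf j

end Coordinates

section Quasihomogeneous

/-- `P` is quasihomogeneous with weights `ω`: it is multiplied by `|e^u|²` under the dilation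
`z_j ↦ e^{ω_j u} z_j`, for every complex `u`. This is what `φ_{a,θ}` needs of a weighted homogeneous
polynomial, for which `ω_j = 1 / m_j`. -/
def IsQuasihomogeneous (ω : Fin N → ℂ) (P : (Fin N → ℂ) → ℝ) : Prop :=
  ∀ (u : ℂ) (z' : Fin N → ℂ), P (fun j => exp (ω j * u) * z' j) = ‖exp u‖ ^ 2 * P z'

variable {m : Fin N → ℕ} {P : (Fin N → ℂ) → ℝ}

lemma IsQuasihomogeneous.map_zero {ω : Fin N → ℂ} (hP : IsQuasihomogeneous ω P) : P 0 = 0 := by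
  have hscale : ‖exp (1 : ℂ)‖ ^ 2 * P 0 = P 0 := by
    simpa only [Pi.zero_apply, mul_zero, ← Pi.zero_def] using (hP 1 0).symm
  have hne : ‖exp (1 : ℂ)‖ ^ 2 ≠ 1 := by
    rw [norm_exp, one_re, ← Real.exp_nat_mul, mul_one]
    exact (Real.one_lt_exp_iff.2 (Nat.cast_pos.2 two_pos)).ne'
  exact (mul_left_eq_self₀.1 hscale).resolve_left hne

lemma prod_exp_pow_of_wt_eq_half {K : Fin N → ℕ} (hK : wt m K = 1 / 2) (u : ℂ) :
    ∏ j, exp (1 / (m j : ℂ) * u) ^ K j = exp u := by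
  have hsum : ∑ j, (K j : ℂ) / m j = 1 := by
    have hreal : ∑ j, (K j : ℝ) / m j = 2 * wt m K := by
      rw [wt, Finset.mul_sum]
      exact Finset.sum_congr rfl fun j _ => by ring
    rw [hK, mul_one_div_cancel two_ne_zero] at hreal
    rw [← ofReal_one, ← hreal]
    push_cast
    rfl
  calc ∏ j, exp (1 / (m j : ℂ) * u) ^ K j
      = ∏ j, exp ((K j : ℂ) / m j * u) :=
        Finset.prod_congr rfl fun j _ => by rw [← exp_nat_mul]; congr 1; ring
    _ = exp u := by rw [← exp_sum, ← Finset.sum_mul, hsum, one_mul]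

lemma IsWHP.isQuasihomogeneous (hP : IsWHP m P) :
    IsQuasihomogeneous (fun j => 1 / (m j : ℂ)) P := by
  intro u z'
  obtain ⟨c, -, -, hwt, hsum⟩ := hP
  rw [← ofReal_inj, ofReal_mul, hsum, hsum, ← smul_eq_mul, smul_finsum]
  refine finsum_congr fun K => ?_
  rw [smul_finsum]
  refine finsum_congr fun L => ?_
  by_cases hc : c K L = 0
  · simp only [hc, zero_mul, smul_zero]
  obtain ⟨hK, hL⟩ := hwt K L hc
  have hconj : ∏ j, starRingEnd ℂ (exp (1 / (m j : ℂ) * u)) ^ L j = starRingEnd ℂ (exp u) := by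
    simp only [← prod_exp_pow_of_wt_eq_half hL u, map_prod, map_pow]
  simp only [map_mul, mul_pow, Finset.prod_mul_distrib, prod_exp_pow_of_wt_eq_half hK, hconj,
    smul_eq_mul, ofReal_pow, ← mul_conj']
  ring

lemma IsWHP.nonneg (hP : IsWHP m P) (hPpos : ∀ z', z' ≠ 0 → 0 < P z') (z' : Fin N → ℂ) :
    0 ≤ P z' := by
  obtain rfl | hz' := eq_or_ne z' 0
  · exact hP.isQuasihomogeneous.map_zero.ge
  · exact (hPpos z' hz').le

end Quasihomogeneous

section Ellipsoid

open scoped ComplexConjugate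

/-- The map `φ_{a,θ}` for arbitrary complex weights `ω` in place of `1 / m_j`. -/
def ellipsoidAut (ω : Fin N → ℂ) (a : ℂ) (θ : ℝ) (z : CSp N) : CSp N :=
  mkPt (fun j => ((1 - ‖a‖ ^ 2 : ℝ) : ℂ) ^ (ω j / 2) * (1 - conj a * lastC z) ^ (-ω j) * initC z j)
    (discAut a θ (lastC z))

variable {ω : Fin N → ℂ} {P : (Fin N → ℂ) → ℝ} {a : ℂ} {z : CSp N}

lemma phiMap_eq_ellipsoidAut (m : Fin N → ℕ) (a : ℂ) (θ : ℝ) :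
    phiMap m a θ = ellipsoidAut (fun j => 1 / (m j : ℂ)) a θ := by
  funext z
  simp only [phiMap, ellipsoidAut, discAut, div_div, mul_comm (2 : ℂ)]

lemma lastC_ellipsoidAut (ω : Fin N → ℂ) (a : ℂ) (θ : ℝ) (z : CSp N) :
    lastC (ellipsoidAut ω a θ z) = discAut a θ (lastC z) :=
  lastC_mkPt _ _

lemma initC_ellipsoidAut (ω : Fin N → ℂ) (ha : ‖a‖ < 1) (θ : ℝ) (hz : ‖lastC z‖ < 1) :
    initC (ellipsoidAut ω a θ z) =
      fun j => exp (ω j * logDilation a (lastC z)) * initC z j := by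
  rw [ellipsoidAut, initC_mkPt]
  funext j
  rw [cpow_def_of_ne_zero (ofReal_one_sub_norm_sq_ne_zero ha),
    cpow_def_of_ne_zero (one_sub_conj_mul_ne_zero ha hz), ← exp_add, logDilation]
  congr 2
  ring

lemma differentiableOn_ellipsoidAut (ω : Fin N → ℂ) (ha : ‖a‖ < 1) (θ : ℝ) :
    DifferentiableOn ℂ (ellipsoidAut ω a θ) {z | ‖lastC z‖ < 1} := by
  have hlast := differentiable_lastC (N := N)
  have hinit := differentiable_pi.1 (differentiable_initC (N := N))
  refine differentiableOn_mkPt (differentiableOn_pi.2 fun j z hz => ?_) fun z hz => ?_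
  · have hre := one_sub_conj_mul_re_pos ha hz
    have hpow := (((hlast z).const_mul (conj a)).const_sub 1).cpow_const (c := -ω j) (.inl hre)
    exact ((hpow.const_mul _).mul (hinit j z)).differentiableWithinAt
  · exact ((differentiableAt_discAut ha hz θ).comp z (hlast z)).differentiableWithinAt

lemma ellipsoidAut_ellipsoidAut (ω : Fin N → ℂ) (ha : ‖a‖ < 1) (θ : ℝ) (hz : ‖lastC z‖ < 1) :
    ellipsoidAut ω (invCenter a θ) (-θ) (ellipsoidAut ω a θ z) = z := by
  have hb : ‖invCenter a θ‖ < 1 := (norm_invCenter a θ).trans_lt ha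
  have hz' : ‖lastC (ellipsoidAut ω a θ z)‖ < 1 :=
    (lastC_ellipsoidAut ω a θ z).symm ▸ norm_discAut_lt_one ha hz θ
  rw [← mkPt_initC_lastC (ellipsoidAut ω _ _ _), initC_ellipsoidAut ω hb _ hz',
    initC_ellipsoidAut ω ha θ hz]
  simp only [lastC_ellipsoidAut, discAut_discAut ha hz, logDilation_discAut ha hz, mul_neg, exp_neg,
    inv_mul_cancel_left₀ (exp_ne_zero _), mkPt_initC_lastC]

lemma one_sub_norm_lastC_sq_add_ellipsoidAut (hP : IsQuasihomogeneous ω P) (ha : ‖a‖ < 1) (θ : ℝ)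
    (hz : ‖lastC z‖ < 1) :
    1 - (‖lastC (ellipsoidAut ω a θ z)‖ ^ 2 + P (initC (ellipsoidAut ω a θ z))) =
      ‖exp (logDilation a (lastC z))‖ ^ 2 * (1 - (‖lastC z‖ ^ 2 + P (initC z))) := by
  rw [lastC_ellipsoidAut, initC_ellipsoidAut ω ha θ hz, hP]
  linear_combination one_sub_norm_discAut_sq ha hz θ

lemma mem_DP : z ∈ DP P ↔ ‖lastC z‖ ^ 2 + P (initC z) < 1 := Iff.rfl

lemma norm_lastC_lt_one_of_mem_DP (hP : ∀ z', 0 ≤ P z') (hz : z ∈ DP P) : ‖lastC z‖ < 1 :=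
  (sq_lt_one_iff₀ (norm_nonneg _)).1 <|
    (le_add_of_nonneg_right (hP (initC z))).trans_lt (mem_DP.1 hz)

lemma mapsTo_ellipsoidAut (hP : IsQuasihomogeneous ω P) (hP₀ : ∀ z', 0 ≤ P z') (ha : ‖a‖ < 1)
    (θ : ℝ) : MapsTo (ellipsoidAut ω a θ) (DP P) (DP P) := by
  intro z hz
  have hexp := norm_pos_iff.2 (exp_ne_zero (logDilation a (lastC z)))
  rw [mem_DP, ← sub_pos,
    one_sub_norm_lastC_sq_add_ellipsoidAut hP ha θ (norm_lastC_lt_one_of_mem_DP hP₀ hz)]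
  exact mul_pos (pow_pos hexp 2) (sub_pos.2 (mem_DP.1 hz))

lemma leftInvOn_ellipsoidAut (ω : Fin N → ℂ) (hP₀ : ∀ z', 0 ≤ P z') (ha : ‖a‖ < 1) (θ : ℝ) :
    LeftInvOn (ellipsoidAut ω (invCenter a θ) (-θ)) (ellipsoidAut ω a θ) (DP P) :=
  fun _ hz => ellipsoidAut_ellipsoidAut ω ha θ (norm_lastC_lt_one_of_mem_DP hP₀ hz)

lemma rightInvOn_ellipsoidAut (ω : Fin N → ℂ) (hP₀ : ∀ z', 0 ≤ P z') (ha : ‖a‖ < 1) (θ : ℝ) :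
    RightInvOn (ellipsoidAut ω (invCenter a θ) (-θ)) (ellipsoidAut ω a θ) (DP P) := by
  have hb : ‖invCenter a θ‖ < 1 := (norm_invCenter a θ).trans_lt ha
  simpa only [invCenter_invCenter, neg_neg] using leftInvOn_ellipsoidAut ω hP₀ hb (-θ)

lemma invOn_ellipsoidAut (ω : Fin N → ℂ) (hP₀ : ∀ z', 0 ≤ P z') (ha : ‖a‖ < 1) (θ : ℝ) :
    InvOn (ellipsoidAut ω (invCenter a θ) (-θ)) (ellipsoidAut ω a θ) (DP P) (DP P) :=
  ⟨leftInvOn_ellipsoidAut ω hP₀ ha θ, rightInvOn_ellipsoidAut ω hP₀ ha θ⟩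

lemma bijOn_ellipsoidAut (hP : IsQuasihomogeneous ω P) (hP₀ : ∀ z', 0 ≤ P z') (ha : ‖a‖ < 1)
    (θ : ℝ) : BijOn (ellipsoidAut ω a θ) (DP P) (DP P) :=
  have hb : ‖invCenter a θ‖ < 1 := (norm_invCenter a θ).trans_lt ha
  (invOn_ellipsoidAut ω hP₀ ha θ).bijOn (mapsTo_ellipsoidAut hP hP₀ ha θ)
    (mapsTo_ellipsoidAut hP hP₀ hb (-θ))

end Ellipsoid

theorem stmt9_general {N : ℕ} {ω : Fin N → ℂ} {P : (Fin N → ℂ) → ℝ}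
    (hP : IsQuasihomogeneous ω P) (hP₀ : ∀ z', 0 ≤ P z') {a : ℂ} (ha : ‖a‖ < 1) (θ : ℝ) :
    DifferentiableOn ℂ (ellipsoidAut ω a θ) (DP P) ∧ InjOn (ellipsoidAut ω a θ) (DP P) ∧
      ellipsoidAut ω a θ '' DP P = DP P := by
  have hdisc : DP P ⊆ {z | ‖lastC z‖ < 1} := fun _ hz => norm_lastC_lt_one_of_mem_DP hP₀ hz
  have hbij := bijOn_ellipsoidAut hP hP₀ ha θ
  exact ⟨(differentiableOn_ellipsoidAut ω ha θ).mono hdisc, hbij.injOn, hbij.image_eq⟩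

/-- For every `a ∈ ℂ` with `|a| < 1` and every `θ ∈ ℝ`, the map `φ_{a,θ}` is an
automorphism of `D_P`: it is holomorphic and injective on `D_P` and maps `D_P` onto `D_P`. -/
theorem stmt9 {N : ℕ} (hN : 1 ≤ N) (m : Fin N → ℕ) (hm : ∀ j, 0 < m j)
    (P : (Fin N → ℂ) → ℝ) (hP : IsWHP m P)
    (hPpos : ∀ z' : Fin N → ℂ, z' ≠ 0 → 0 < P z')
    (a : ℂ) (ha : ‖a‖ < 1) (θ : ℝ) :
    DifferentiableOn ℂ (phiMap m a θ) (DP P) ∧ InjOn (phiMap m a θ) (DP P) ∧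
    phiMap m a θ '' DP P = DP P :=
  phiMap_eq_ellipsoidAut m a θ ▸ stmt9_general hP.isQuasihomogeneous (hP.nonneg hPpos) ha θ
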